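/- arXiv:2304.13332 — 2 statements merged into one kernel-verified Lean document; each statement's English description precedes it below -/
import Mathlib

section
/- Let X be a real Hilbert space, K a compact subset of X, and γ ∈ (0,1]. For any sequence (f_n) produced by the weak greedy algorithm with parameter γ, the error satisfies σ_n(K) ≤ γ^{−1} (n! V_n)^{1/n} ε_n(co(K)) for every n ≥ 1. -/
open scoped RealInnerProductSpace

/-- Dyadic entropy number: infimum of all `ε > 0` such that `K` is covered by `2^n`
balls of radius `ε`. -/
noncomputable def entropyNumber {X : Type*} [NormedAddCommGroup X] (n : ℕ) (K : Set X) : ℝ :=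
  sInf {ε : ℝ | 0 < ε ∧ ∃ c : Fin (2 ^ n) → X, K ⊆ ⋃ i, Metric.closedBall (c i) ε}

/-- Symmetric (absolutely) convex hull: closure of the set of finite sums `∑ cᵢ gᵢ`
with `gᵢ ∈ K` and `∑ |cᵢ| ≤ 1`. -/
noncomputable def symConvexHull {X : Type*} [NormedAddCommGroup X] [NormedSpace ℝ X]
    (K : Set X) : Set X :=
  closure {x : X | ∃ (m : ℕ) (c : Fin m → ℝ) (g : Fin m → X),
    (∀ i, g i ∈ K) ∧ (∑ i, |c i|) ≤ 1 ∧ x = ∑ i, c i • g i}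

/-- Volume of the unit Euclidean ball in `ℝⁿ`. -/
noncomputable def unitBallVol (n : ℕ) : ℝ :=
  Real.pi ^ ((n : ℝ) / 2) / Real.Gamma ((n : ℝ) / 2 + 1)

/-- Span of the first `n` terms of a sequence. -/
noncomputable def spanFirst {X : Type*} [NormedAddCommGroup X] [NormedSpace ℝ X]
    (f : ℕ → X) (n : ℕ) : Submodule ℝ X :=
  Submodule.span ℝ (f '' {i | i < n})

/-- The weak greedy algorithm with parameter `γ`: `f n` (the `(n+1)`-st iterate) lies in `K`
and its distance to the span of the previous iterates is at least `γ` times that of any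
other element of `K`. -/
def IsWeakGreedy {X : Type*} [NormedAddCommGroup X] [NormedSpace ℝ X]
    (γ : ℝ) (K : Set X) (f : ℕ → X) : Prop :=
  ∀ n : ℕ, f n ∈ K ∧ ∀ g ∈ K,
    γ * Metric.infDist g (spanFirst f n : Set X) ≤ Metric.infDist (f n) (spanFirst f n : Set X)

/-- The greedy error `σ_n(K) = sup_{f ∈ K} dist(f, span{f_1,…,f_n})`. -/
noncomputable def greedyError {X : Type*} [NormedAddCommGroup X] [NormedSpace ℝ X]
    (K : Set X) (f : ℕ → X) (n : ℕ) : ℝ :=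
  sSup ((fun g => Metric.infDist g (spanFirst f n : Set X)) '' K)

/-- Kolmogorov `n`-width. -/
noncomputable def kolmogorovWidth {X : Type*} [NormedAddCommGroup X] [NormedSpace ℝ X]
    (n : ℕ) (K : Set X) : ℝ :=
  sInf {d : ℝ | ∃ Y : Submodule ℝ X, FiniteDimensional ℝ Y ∧ Module.finrank ℝ Y ≤ n ∧
    d = sSup ((fun g => Metric.infDist g (Y : Set X)) '' K)}

/-- `f` admits an `ℓ¹` representation over the dictionary `D`. -/
def HasL1Rep {X : Type*} [NormedAddCommGroup X] [NormedSpace ℝ X] (D : Set X) (f : X) : Prop :=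
  ∃ (c : ℕ → ℝ) (g : ℕ → X), (∀ i, g i ∈ D) ∧ Summable (fun i => |c i|) ∧
    HasSum (fun i => c i • g i) f

/-- The variation norm `‖f‖_{L₁(D)}`. -/
noncomputable def varNorm {X : Type*} [NormedAddCommGroup X] [NormedSpace ℝ X]
    (D : Set X) (f : X) : ℝ :=
  sInf {t : ℝ | ∃ (c : ℕ → ℝ) (g : ℕ → X), (∀ i, g i ∈ D) ∧ Summable (fun i => |c i|) ∧
    HasSum (fun i => c i • g i) f ∧ t = ∑' i, |c i|}

/-- The orthogonal greedy algorithm with target `f`: `fa 0 = 0`; at each step `g n ∈ D`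
maximizes `|⟨g, f - fa n⟩|` over `D`, and `fa (n+1)` is the orthogonal projection of `f`
onto `span{g 0, …, g n}`. -/
def IsOGA {X : Type*} [NormedAddCommGroup X] [InnerProductSpace ℝ X]
    (D : Set X) (f : X) (g fa : ℕ → X) : Prop :=
  fa 0 = 0 ∧ ∀ n : ℕ,
    g n ∈ D ∧ (∀ h ∈ D, |⟪h, f - fa n⟫| ≤ |⟪g n, f - fa n⟫|) ∧
    fa (n + 1) ∈ Submodule.span ℝ (g '' {i | i ≤ n}) ∧
    ∀ w ∈ Submodule.span ℝ (g '' {i | i ≤ n}), ⟪f - fa (n + 1), w⟫ = 0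

/-- Best `n`-term approximation error `E_n(f, D)`. -/
noncomputable def bestNTermError {X : Type*} [NormedAddCommGroup X] [NormedSpace ℝ X]
    (D : Set X) (n : ℕ) (f : X) : ℝ :=
  sInf {r : ℝ | ∃ (c : Fin n → ℝ) (g : Fin n → X), (∀ i, g i ∈ D) ∧ r = ‖f - ∑ i, c i • g i‖}

/-- The K-functional `K(t, g)` between `X` and `L₁(D)`. -/
noncomputable def Kfunctional {X : Type*} [NormedAddCommGroup X] [NormedSpace ℝ X]
    (D : Set X) (t : ℝ) (gg : X) : ℝ :=
  sInf {s : ℝ | ∃ h : X, HasL1Rep D h ∧ s = ‖gg - h‖ + t * varNorm D h}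

/-- The interpolation norm `‖g‖_θ = sup_{t > 0} t^{-θ} K(t, g)`. -/
noncomputable def interpNorm {X : Type*} [NormedAddCommGroup X] [NormedSpace ℝ X]
    (D : Set X) (θ : ℝ) (gg : X) : ℝ :=
  sSup ((fun t => t ^ (-θ) * Kfunctional D t gg) '' Set.Ioi (0 : ℝ))

/-!
Suppose that `2ⁿ` balls of radius `ε` cover `co(K)` and that `f₁, …, fₙ` are linearly independent
(otherwise the product below vanishes), and take coordinates with respect to their Gram–Schmidt
orthonormalization; this is a contraction of `X` into `ℝⁿ`. The combinations `∑ xᵢ fᵢ` with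
`∑ |xᵢ| ≤ 1` lie in `co(K)`, and their coordinates form the image of the `ℓ¹` ball, of volume
`2ⁿ / n!`, under a triangular matrix with diagonal entries `dist(fᵢ, Xᵢ₋₁)`. Comparing volumes gives
`∏ dist(fᵢ, Xᵢ₋₁) ≤ n! Vₙ εⁿ`, and the greedy choice makes each of these `n` distances at least
`γ σₙ(K)`.
-/

open MeasureTheory

section Volume

variable {ι : Type*} [Fintype ι]

theorem volume_setOf_sum_abs_le_one :
    volume {x : ι → ℝ | ∑ i, |x i| ≤ 1} =
      ENNReal.ofReal (2 ^ Fintype.card ι / (Fintype.card ι).factorial) := by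
  cases isEmpty_or_nonempty ι
  · simp [volume_pi]
  have hGamma : Real.Gamma (1 + 1) = 1 := by simpa using Real.Gamma_nat_eq_factorial 1
  simpa [hGamma, Real.Gamma_nat_eq_factorial] using volume_sum_rpow_le (ι := ι) le_rfl 1

theorem unitBallVol_nonneg (n : ℕ) : 0 ≤ unitBallVol n :=
  div_nonneg (by positivity) (Real.Gamma_nonneg_of_nonneg (by positivity))

theorem volume_euclideanClosedBall (c : EuclideanSpace ℝ ι) {r : ℝ} (hr : 0 ≤ r) :
    volume (Metric.closedBall c r) =
      ENNReal.ofReal (unitBallVol (Fintype.card ι) * r ^ Fintype.card ι) := by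
  cases isEmpty_or_nonempty ι
  · have hball : Metric.closedBall c r = Set.univ :=
      Set.eq_univ_of_forall fun x => by simpa [Subsingleton.elim x c] using hr
    rw [hball, ← (PiLp.volume_preserving_toLp ι).measure_preimage
      MeasurableSet.univ.nullMeasurableSet]
    simp [unitBallVol, volume_pi]
  have hsqrt : √Real.pi ^ Fintype.card ι = Real.pi ^ ((Fintype.card ι : ℝ) / 2) := by
    rw [Real.sqrt_eq_rpow, ← Real.rpow_mul_natCast Real.pi_pos.le, one_div_mul_eq_div]
  rw [EuclideanSpace.volume_closedBall, hsqrt, ← unitBallVol, mul_comm, ← ENNReal.ofReal_pow hr,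
    ← ENNReal.ofReal_mul (unitBallVol_nonneg _)]

theorem volume_le_of_subset_iUnion_closedBall {κ : Type*} [Fintype κ]
    {S : Set (EuclideanSpace ℝ ι)} {c : κ → EuclideanSpace ℝ ι} {r : ℝ} (hr : 0 ≤ r)
    (hS : S ⊆ ⋃ k, Metric.closedBall (c k) r) :
    volume S ≤ ENNReal.ofReal
      (Fintype.card κ * (unitBallVol (Fintype.card ι) * r ^ Fintype.card ι)) :=
  calc volume S
    _ ≤ ∑ k, volume (Metric.closedBall (c k) r) :=
      (measure_mono hS).trans (measure_iUnion_fintype_le _ _)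
    _ = _ := by
      rw [Finset.sum_congr rfl fun k _ => volume_euclideanClosedBall (c k) hr, Finset.sum_const,
        Finset.card_univ, ← ENNReal.ofReal_nsmul, nsmul_eq_mul]

theorem volume_image_toLp_mulVec [DecidableEq ι] (A : Matrix ι ι ℝ) (S : Set (ι → ℝ)) :
    volume ((fun x => WithLp.toLp 2 (A.mulVec x)) '' S) =
      ENNReal.ofReal |A.det| * volume S := by
  have hofLp : MeasurePreserving (MeasurableEquiv.toLp 2 (ι → ℝ)).symm :=
    PiLp.volume_preserving_ofLp ι
  calc volume ((fun x => WithLp.toLp 2 (A.mulVec x)) '' S)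
    _ = volume ((MeasurableEquiv.toLp 2 (ι → ℝ)).symm ⁻¹' (A.toLin' '' S)) := by
      rw [← MeasurableEquiv.image_eq_preimage_symm, Set.image_image]
      rfl
    _ = ENNReal.ofReal |A.det| * volume S := by
      rw [hofLp.measure_preimage_equiv, Measure.addHaar_image_linearMap, LinearMap.det_toLin']

end Volume

section SymConvexHull

variable {X : Type*} [NormedAddCommGroup X] [NormedSpace ℝ X] {K : Set X}

theorem sum_smul_mem_symConvexHull {ι : Type*} [Fintype ι] {v : ι → X} {x : ι → ℝ}
    (hv : ∀ i, v i ∈ K) (hx : ∑ i, |x i| ≤ 1) : ∑ i, x i • v i ∈ symConvexHull K := by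
  let σ := (Fintype.equivFin ι).symm
  refine subset_closure ⟨Fintype.card ι, x ∘ σ, v ∘ σ, fun i => hv _, ?_, ?_⟩
  · rwa [← Equiv.sum_comp σ] at hx
  · exact (Equiv.sum_comp σ fun i => x i • v i).symm

theorem isBounded_symConvexHull (hK : Bornology.IsBounded K) :
    Bornology.IsBounded (symConvexHull K) := by
  obtain ⟨R, hR_pos, hR⟩ := hK.exists_pos_norm_le
  refine Bornology.IsBounded.closure (isBounded_iff_forall_norm_le.2 ⟨R, ?_⟩)
  rintro _ ⟨m, c, g, hg, hc, rfl⟩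
  calc ‖∑ i, c i • g i‖
    _ ≤ ∑ i, |c i| * R := norm_sum_le_of_le _ fun i _ => by
      rw [norm_smul, Real.norm_eq_abs]
      gcongr
      exact hR _ (hg i)
    _ = (∑ i, |c i|) * R := (Finset.sum_mul _ _ _).symm
    _ ≤ R := mul_le_of_le_one_left hR_pos.le hc

end SymConvexHull

section EntropyNumber

variable {X : Type*} [NormedAddCommGroup X]

theorem entropyNumber_nonneg (n : ℕ) (K : Set X) : 0 ≤ entropyNumber n K :=
  Real.sInf_nonneg fun _ hε => hε.1.le

theorem exists_cover_of_entropyNumber_lt {n : ℕ} {K : Set X} (hK : Bornology.IsBounded K) {ε : ℝ}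
    (hε : entropyNumber n K < ε) :
    ∃ c : Fin (2 ^ n) → X, K ⊆ ⋃ i, Metric.closedBall (c i) ε := by
  obtain ⟨R, hR_pos, hR⟩ := hK.exists_pos_norm_le
  have hnonempty :
      {ε : ℝ | 0 < ε ∧ ∃ c : Fin (2 ^ n) → X, K ⊆ ⋃ i, Metric.closedBall (c i) ε}.Nonempty :=
    ⟨R, hR_pos, fun _ => 0, fun x hx =>
      Set.mem_iUnion.2 ⟨0, mem_closedBall_zero_iff.2 (hR x hx)⟩⟩
  obtain ⟨δ, ⟨-, c, hc⟩, hδ⟩ := exists_lt_of_csInf_lt hnonempty hε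
  exact ⟨c, hc.trans (Set.iUnion_mono fun i => Metric.closedBall_subset_closedBall hδ.le)⟩

end EntropyNumber

section InnerProductSpace

variable {X : Type*} [NormedAddCommGroup X] [InnerProductSpace ℝ X] {ι : Type*}

theorem lipschitzWith_toLp_inner [Fintype ι] {e : ι → X} (he : Orthonormal ℝ e) :
    LipschitzWith 1 fun x => WithLp.toLp 2 fun i => ⟪e i, x⟫ := by
  refine LipschitzWith.mk_one fun x y => ?_
  rw [EuclideanSpace.dist_eq, dist_eq_norm x y]
  refine Real.sqrt_le_iff.2 ⟨norm_nonneg _, ?_⟩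
  simpa [Real.dist_eq, inner_sub_right] using
    he.sum_inner_products_le (x - y) (s := Finset.univ)

theorem two_pow_mul_abs_det_inner_le_of_cover [Fintype ι] [DecidableEq ι] {κ : Type*} [Fintype κ]
    {K : Set X} {e v : ι → X} (he : Orthonormal ℝ e) (hv : ∀ j, v j ∈ K)
    {c : κ → X} {ε : ℝ} (hε : 0 ≤ ε) (hc : symConvexHull K ⊆ ⋃ k, Metric.closedBall (c k) ε) :
    2 ^ Fintype.card ι * |(Matrix.of fun i j => ⟪e i, v j⟫).det| ≤
      Fintype.card κ *
        ((Fintype.card ι).factorial * unitBallVol (Fintype.card ι) * ε ^ Fintype.card ι) := by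
  set A : Matrix ι ι ℝ := Matrix.of fun i j => ⟪e i, v j⟫
  let T : X → EuclideanSpace ℝ ι := fun x => WithLp.toLp 2 fun i => ⟪e i, x⟫
  have hTsum (x : ι → ℝ) : WithLp.toLp 2 (A.mulVec x) = T (∑ j, x j • v j) := by
    ext i
    simp [T, A, Matrix.mulVec, dotProduct, inner_sum, inner_smul_right, mul_comm]
  have hcover : (fun x => WithLp.toLp 2 (A.mulVec x)) '' {x | ∑ i, |x i| ≤ 1} ⊆
      ⋃ k, Metric.closedBall (T (c k)) ε := by
    rintro _ ⟨x, hx, rfl⟩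
    obtain ⟨k, hk⟩ := Set.mem_iUnion.1 (hc (sum_smul_mem_symConvexHull hv hx))
    refine Set.mem_iUnion.2 ⟨k, ?_⟩
    simpa only [hTsum, NNReal.coe_one, one_mul] using
      (lipschitzWith_toLp_inner he).mapsTo_closedBall (c k) ε hk
  have hV := unitBallVol_nonneg (Fintype.card ι)
  have hvolume := volume_le_of_subset_iUnion_closedBall hε hcover
  rw [volume_image_toLp_mulVec, volume_setOf_sum_abs_le_one, ← ENNReal.ofReal_mul (abs_nonneg _),
    ENNReal.ofReal_le_ofReal_iff (by positivity), mul_div_assoc', div_le_iff₀ (by positivity)]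
    at hvolume
  linarith

variable [LinearOrder ι] [LocallyFiniteOrderBot ι]

open InnerProductSpace

section WellFounded

variable [WellFoundedLT ι] (v : ι → X)

theorem real_inner_gramSchmidt_self (i : ι) :
    ⟪gramSchmidt ℝ v i, v i⟫ = ‖gramSchmidt ℝ v i‖ ^ 2 := by
  conv_lhs => rw [gramSchmidt_def'' ℝ v i]
  rw [inner_add_right, inner_sum, Finset.sum_eq_zero, add_zero, real_inner_self_eq_norm_sq]
  intro j hj
  rw [inner_smul_right, gramSchmidt_orthogonal ℝ v (Finset.mem_Iio.1 hj).ne', mul_zero]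

theorem real_inner_gramSchmidtNormed_left (i : ι) (x : X) :
    ⟪gramSchmidtNormed ℝ v i, x⟫ = ‖gramSchmidt ℝ v i‖⁻¹ * ⟪gramSchmidt ℝ v i, x⟫ :=
  real_inner_smul_left _ _ _

theorem infDist_span_Iio_le_norm_gramSchmidt (i : ι) :
    Metric.infDist (v i) (Submodule.span ℝ (v '' Set.Iio i)) ≤ ‖gramSchmidt ℝ v i‖ := by
  have hmem : v i - gramSchmidt ℝ v i ∈ Submodule.span ℝ (v '' Set.Iio i) := by
    rw [sub_eq_iff_eq_add'.2 (gramSchmidt_def'' ℝ v i), ← span_gramSchmidt_Iio ℝ v i]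
    exact Submodule.sum_mem _ fun j hj => Submodule.smul_mem _ _
      (Submodule.subset_span (Set.mem_image_of_mem _ (Finset.mem_Iio.1 hj)))
  simpa [dist_eq_norm] using Metric.infDist_le_dist_of_mem (x := v i) hmem

end WellFounded

variable [Fintype ι] (v : ι → X)

theorem det_inner_gramSchmidtNormed :
    (Matrix.of fun i j => ⟪gramSchmidtNormed ℝ v i, v j⟫).det = ∏ i, ‖gramSchmidt ℝ v i‖ := by
  have hupper : (Matrix.of fun i j => ⟪gramSchmidtNormed ℝ v i, v j⟫).IsUpperTriangular :=
    fun i j (hji : j < i) => by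
      rw [Matrix.of_apply, real_inner_gramSchmidtNormed_left, gramSchmidt_inv_triangular ℝ v hji,
        mul_zero]
  rw [Matrix.det_of_isUpperTriangular hupper]
  refine Finset.prod_congr rfl fun i _ => ?_
  rw [Matrix.of_apply, real_inner_gramSchmidtNormed_left, real_inner_gramSchmidt_self, pow_two,
    ← mul_assoc, inv_mul_mul_self]

variable {v}

theorem two_pow_mul_prod_norm_gramSchmidt_le_of_cover {κ : Type*} [Fintype κ] {K : Set X}
    (hv : ∀ j, v j ∈ K) {c : κ → X} {ε : ℝ} (hε : 0 ≤ ε)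
    (hc : symConvexHull K ⊆ ⋃ k, Metric.closedBall (c k) ε) :
    2 ^ Fintype.card ι * ∏ i, ‖gramSchmidt ℝ v i‖ ≤
      Fintype.card κ *
        ((Fintype.card ι).factorial * unitBallVol (Fintype.card ι) * ε ^ Fintype.card ι) := by
  by_cases hzero : ∃ i, gramSchmidt ℝ v i = 0
  · obtain ⟨i, hi⟩ := hzero
    have hV := unitBallVol_nonneg (Fintype.card ι)
    rw [Finset.prod_eq_zero (Finset.mem_univ i) (by rw [hi, norm_zero]), mul_zero]
    positivity
  push Not at hzero
  have hnormed (i : ι) : gramSchmidtNormed ℝ v i ≠ 0 := by simp [gramSchmidtNormed, hzero i]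
  have horthonormal : Orthonormal ℝ (gramSchmidtNormed ℝ v) :=
    (gramSchmidtNormed_orthonormal' v).comp (fun i => ⟨i, hnormed i⟩)
      fun i j hij => congrArg Subtype.val hij
  have hdet := two_pow_mul_abs_det_inner_le_of_cover horthonormal hv hε hc
  rwa [det_inner_gramSchmidtNormed, abs_of_nonneg (by positivity)] at hdet

theorem prod_norm_gramSchmidt_le_entropyNumber {K : Set X} (hK : Bornology.IsBounded K)
    (hv : ∀ j, v j ∈ K) :
    ∏ i, ‖gramSchmidt ℝ v i‖ ≤ (Fintype.card ι).factorial * unitBallVol (Fintype.card ι) *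
      entropyNumber (Fintype.card ι) (symConvexHull K) ^ Fintype.card ι := by
  set ε₀ := entropyNumber (Fintype.card ι) (symConvexHull K)
  set B := (Fintype.card ι).factorial * unitBallVol (Fintype.card ι)
  have hcover (ε : ℝ) (hε : ε₀ < ε) : ∏ i, ‖gramSchmidt ℝ v i‖ ≤ B * ε ^ Fintype.card ι := by
    obtain ⟨c, hc⟩ := exists_cover_of_entropyNumber_lt (isBounded_symConvexHull hK) hε
    have hprod := two_pow_mul_prod_norm_gramSchmidt_le_of_cover hv
      ((entropyNumber_nonneg _ _).trans hε.le) hc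
    rw [Fintype.card_fin, Nat.cast_pow, Nat.cast_ofNat] at hprod
    exact le_of_mul_le_mul_left hprod (by positivity)
  have hlim : Filter.Tendsto (fun ε => B * ε ^ Fintype.card ι) (nhdsWithin ε₀ (Set.Ioi ε₀))
      (nhds (B * ε₀ ^ Fintype.card ι)) :=
    (Continuous.tendsto (by fun_prop) ε₀).mono_left nhdsWithin_le_nhds
  exact ge_of_tendsto hlim (Filter.eventually_of_mem self_mem_nhdsWithin hcover)

end InnerProductSpace

theorem prod_infDist_spanFirst_le_entropyNumber {X : Type*} [NormedAddCommGroup X]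
    [InnerProductSpace ℝ X] {K : Set X} (hK : Bornology.IsBounded K) {f : ℕ → X}
    (hf : ∀ i, f i ∈ K) (n : ℕ) :
    ∏ i : Fin n, Metric.infDist (f i) (spanFirst f i : Set X) ≤
      n.factorial * unitBallVol n * entropyNumber n (symConvexHull K) ^ n := by
  let v : Fin n → X := fun i => f i
  have hspan (i : Fin n) : spanFirst f i = Submodule.span ℝ (v '' Set.Iio i) := by
    rw [spanFirst, ← Set.image_image f Fin.val, Fin.image_val_Iio]
    rfl
  calc ∏ i : Fin n, Metric.infDist (f i) (spanFirst f i : Set X)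
    _ ≤ ∏ i, ‖InnerProductSpace.gramSchmidt ℝ v i‖ :=
      Finset.prod_le_prod (fun _ _ => Metric.infDist_nonneg) fun i _ => by
        rw [hspan]
        exact infDist_span_Iio_le_norm_gramSchmidt v i
    _ ≤ n.factorial * unitBallVol n * entropyNumber n (symConvexHull K) ^ n := by
      simpa using prod_norm_gramSchmidt_le_entropyNumber hK fun i : Fin n => hf i

namespace IsWeakGreedy

variable {X : Type*} [NormedAddCommGroup X] [NormedSpace ℝ X] {γ : ℝ} {K : Set X} {f : ℕ → X}

theorem isBounded (hf : IsWeakGreedy γ K f) (hγ : 0 < γ) : Bornology.IsBounded K := by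
  refine isBounded_iff_forall_norm_le.2 ⟨‖f 0‖ / γ, fun g hg => (le_div_iff₀' hγ).2 ?_⟩
  simpa [spanFirst] using (hf 0).2 g hg

theorem mul_greedyError_le_infDist (hf : IsWeakGreedy γ K f) (hγ : 0 < γ) {i n : ℕ}
    (hin : i ≤ n) :
    γ * greedyError K f n ≤ Metric.infDist (f i) (spanFirst f i : Set X) := by
  have hspan : (spanFirst f i : Set X) ⊆ spanFirst f n :=
    Submodule.span_mono (Set.image_mono fun _ hj => lt_of_lt_of_le hj hin)
  rw [← le_div_iff₀' hγ]
  refine csSup_le (Set.Nonempty.image _ ⟨f 0, (hf 0).1⟩) ?_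
  rintro _ ⟨g, hg, rfl⟩
  calc Metric.infDist g (spanFirst f n)
    _ ≤ Metric.infDist g (spanFirst f i) :=
      Metric.infDist_le_infDist_of_subset hspan (Submodule.nonempty _)
    _ ≤ Metric.infDist (f i) (spanFirst f i) / γ := (le_div_iff₀' hγ).2 ((hf i).2 g hg)

end IsWeakGreedy

theorem weakGreedy_error_le_entropy_hilbert_general {X : Type*} [NormedAddCommGroup X]
    [InnerProductSpace ℝ X] {K : Set X} {γ : ℝ} (hγ : 0 < γ) {f : ℕ → X}
    (hf : IsWeakGreedy γ K f) {n : ℕ} (hn : n ≠ 0) :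
    greedyError K f n ≤ γ⁻¹ * (n.factorial * unitBallVol n) ^ (n : ℝ)⁻¹ *
      entropyNumber n (symConvexHull K) := by
  set σ := greedyError K f n
  set ε := entropyNumber n (symConvexHull K)
  set B : ℝ := n.factorial * unitBallVol n
  have hB : 0 ≤ B := mul_nonneg (by positivity) (unitBallVol_nonneg n)
  have hε : 0 ≤ ε := entropyNumber_nonneg n _
  have hσ : 0 ≤ σ := Real.sSup_nonneg (Set.forall_mem_image.2 fun _ _ => Metric.infDist_nonneg)
  have hpow : (γ * σ) ^ n ≤ (B ^ (n : ℝ)⁻¹ * ε) ^ n :=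
    calc (γ * σ) ^ n
      _ = ∏ _i : Fin n, γ * σ := by simp
      _ ≤ ∏ i : Fin n, Metric.infDist (f i) (spanFirst f i : Set X) :=
        Finset.prod_le_prod (fun _ _ => by positivity) fun i _ =>
          hf.mul_greedyError_le_infDist hγ i.2.le
      _ ≤ B * ε ^ n :=
        prod_infDist_spanFirst_le_entropyNumber (hf.isBounded hγ) (fun i => (hf i).1) n
      _ = (B ^ (n : ℝ)⁻¹ * ε) ^ n := by rw [mul_pow, Real.rpow_inv_natCast_pow hB hn]
  rw [mul_assoc, le_inv_mul_iff₀ hγ]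
  exact le_of_pow_le_pow_left₀ hn (by positivity) hpow

/-- direct entropy-based bound for the weak greedy algorithm in a
Hilbert space (Theorem 2.1 of the paper). -/
theorem weakGreedy_error_le_entropy_hilbert
    {X : Type*} [NormedAddCommGroup X] [InnerProductSpace ℝ X] [CompleteSpace X]
    (K : Set X) (hK : IsCompact K) (γ : ℝ) (hγ : γ ∈ Set.Ioc (0 : ℝ) 1)
    (f : ℕ → X) (hf : IsWeakGreedy γ K f) (n : ℕ) (hn : 1 ≤ n) :
    greedyError K f n
      ≤ γ⁻¹ * ((n.factorial : ℝ) * unitBallVol n) ^ ((n : ℝ)⁻¹) *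
          entropyNumber n (symConvexHull K) := by
  exact weakGreedy_error_le_entropy_hilbert_general hγ.1 hf (Nat.one_le_iff_ne_zero.1 hn)
end

section
/- Let K be a compact subset of a real Hilbert space X and suppose there exist s > 1/2 and M > 0 with d_n(K) ≤ M n^{−s} for all n ≥ 1. Then for any γ ∈ (0,1] and any sequence produced by the weak greedy algorithm with parameter γ, there is a constant C (depending on s, M, γ but not on n) such that σ_n(K) ≤ C n^{1/2 − s} for all n ≥ 1. -/
open scoped RealInnerProductSpace

/-!
The residuals `dist(f_i, span{f_j : j < i})` are the diagonal entries of the Gram–Schmidt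
triangular factorization of `f`. Restrict to the steps `N ≤ i < N + k` and project `f_i`
orthogonally to `span{f_j : j < N}`: the projected vectors have norm at most `σ_N` and lie within
`dist(f_i, Y)` of the projection `W` of `Y`, where `dim W ≤ m = dim Y`. Since the projections to
`W` of the `k` Gram–Schmidt vectors have squared norms summing to at most `m`, the trace of the
triangular factor is at most `σ_N √(km) + k d_m(K)`. The weak greedy condition bounds this trace
below by `k γ σ_{N+k}`, so `γ σ_{N+k} ≤ σ_N √(m/k) + d_m(K)`. With `k = Lm` and `L` a large
constant this recursion propagates the rate of the widths; it is started by
`σ_1 ≤ (2 + 2/γ) d_1(K)`, which does not involve the size of `K`.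
-/

open InnerProductSpace (gramSchmidt gramSchmidtNormed)

lemma infDist_image_le_of_lipschitzWith_one {α β : Type*} [PseudoMetricSpace α]
    [PseudoMetricSpace β] {φ : α → β} (hφ : LipschitzWith 1 φ) (x : α) (s : Set α) :
    Metric.infDist (φ x) (φ '' s) ≤ Metric.infDist x s := by
  rcases s.eq_empty_or_nonempty with rfl | hs
  · simp only [Set.image_empty, Metric.infDist_empty, le_refl]
  · exact (Metric.le_infDist hs).2 fun y hy =>
      (Metric.infDist_le_dist_of_mem (Set.mem_image_of_mem φ hy)).trans
        (by simpa only [NNReal.coe_one, one_mul] using hφ.dist_le_mul x y)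

section InnerProduct

variable {𝕜 E ι : Type*} [RCLike 𝕜] [NormedAddCommGroup E] [InnerProductSpace 𝕜 E]

lemma infDist_eq_norm_sub_of_sub_mem_orthogonal {U : Submodule 𝕜 E} {x u : E} (hu : u ∈ U)
    (hxu : x - u ∈ Uᗮ) : Metric.infDist x (U : Set E) = ‖x - u‖ := by
  rw [(U.norm_eq_iInf_iff_inner_eq_zero hu).2 ((U.mem_orthogonal' _).1 hxu),
    Metric.infDist_eq_iInf]
  simp only [dist_eq_norm]
  rfl

lemma infDist_eq_norm_sub_starProjection (U : Submodule 𝕜 E) [U.HasOrthogonalProjection] (x : E) :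
    Metric.infDist x (U : Set E) = ‖x - U.starProjection x‖ :=
  infDist_eq_norm_sub_of_sub_mem_orthogonal (U.starProjection_apply_mem x)
    (U.sub_starProjection_mem_orthogonal x)

section Bessel

variable {e : ι → E} {s : Finset ι}

lemma norm_le_one_of_bessel (he : ∀ x, ∑ i ∈ s, ‖inner 𝕜 (e i) x‖ ^ 2 ≤ ‖x‖ ^ 2) {i : ι}
    (hi : i ∈ s) : ‖e i‖ ≤ 1 := by
  have hsq : (‖e i‖ ^ 2) ^ 2 ≤ ‖e i‖ ^ 2 := by
    refine le_trans ?_ ((Finset.single_le_sum (f := fun j => ‖inner 𝕜 (e j) (e i)‖ ^ 2)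
      (fun _ _ => sq_nonneg _) hi).trans (he (e i)))
    rw [inner_self_eq_norm_sq_to_K, norm_pow, RCLike.norm_ofReal, abs_norm]
  by_contra! h
  nlinarith [one_lt_pow₀ h two_ne_zero]

lemma sum_sq_norm_starProjection_le_finrank
    (he : ∀ x, ∑ i ∈ s, ‖inner 𝕜 (e i) x‖ ^ 2 ≤ ‖x‖ ^ 2)
    (W : Submodule 𝕜 E) [FiniteDimensional 𝕜 W] :
    ∑ i ∈ s, ‖W.starProjection (e i)‖ ^ 2 ≤ Module.finrank 𝕜 W := by
  let b := stdOrthonormalBasis 𝕜 W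
  have parseval (i : ι) : ‖W.starProjection (e i)‖ ^ 2 = ∑ j, ‖inner 𝕜 (e i) (b j : E)‖ ^ 2 := by
    rw [Submodule.starProjection_apply, ← Submodule.coe_norm, ← b.sum_sq_norm_inner_left]
    simp only [Submodule.inner_orthogonalProjectionOnto_eq_of_mem_right]
  calc ∑ i ∈ s, ‖W.starProjection (e i)‖ ^ 2
      = ∑ j, ∑ i ∈ s, ‖inner 𝕜 (e i) (b j : E)‖ ^ 2 := by
        rw [Finset.sum_comm, Finset.sum_congr rfl fun i _ => parseval i]
    _ ≤ ∑ j, ‖(b j : E)‖ ^ 2 := Finset.sum_le_sum fun j _ => he (b j)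
    _ = Module.finrank 𝕜 W := by
        simp [← Submodule.coe_norm, b.norm_eq_one]

lemma re_inner_le_norm_mul_norm_starProjection_add (W : Submodule 𝕜 E)
    [W.HasOrthogonalProjection] (x y : E) :
    RCLike.re (inner 𝕜 x y) ≤
      ‖y‖ * ‖W.starProjection x‖ + ‖x‖ * Metric.infDist y (W : Set E) := by
  have split : inner 𝕜 x y =
      inner 𝕜 (W.starProjection x) y + inner 𝕜 x (y - W.starProjection y) := by
    rw [Submodule.inner_starProjection_left_eq_right, ← inner_add_right, add_sub_cancel]
  rw [split, map_add, infDist_eq_norm_sub_starProjection, mul_comm ‖y‖]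
  exact add_le_add (re_inner_le_norm _ _) (re_inner_le_norm _ _)

lemma sum_re_inner_le_of_bessel (he : ∀ x, ∑ i ∈ s, ‖inner 𝕜 (e i) x‖ ^ 2 ≤ ‖x‖ ^ 2)
    (h : ι → E) (W : Submodule 𝕜 E) [FiniteDimensional 𝕜 W] :
    ∑ i ∈ s, RCLike.re (inner 𝕜 (e i) (h i)) ≤
      √(∑ i ∈ s, ‖h i‖ ^ 2) * √(Module.finrank 𝕜 W) +
        ∑ i ∈ s, Metric.infDist (h i) (W : Set E) := by
  calc ∑ i ∈ s, RCLike.re (inner 𝕜 (e i) (h i))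
      ≤ ∑ i ∈ s, (‖h i‖ * ‖W.starProjection (e i)‖ + Metric.infDist (h i) (W : Set E)) := by
        refine Finset.sum_le_sum fun i hi =>
          (re_inner_le_norm_mul_norm_starProjection_add W _ _).trans ?_
        gcongr
        exact mul_le_of_le_one_left Metric.infDist_nonneg (norm_le_one_of_bessel he hi)
    _ = ∑ i ∈ s, ‖h i‖ * ‖W.starProjection (e i)‖ + ∑ i ∈ s, Metric.infDist (h i) (W : Set E) :=
        Finset.sum_add_distrib
    _ ≤ √(∑ i ∈ s, ‖h i‖ ^ 2) * √(∑ i ∈ s, ‖W.starProjection (e i)‖ ^ 2) +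
        ∑ i ∈ s, Metric.infDist (h i) (W : Set E) := by
        gcongr
        exact Real.sum_mul_le_sqrt_mul_sqrt _ _ _
    _ ≤ _ := by
        gcongr
        exact sum_sq_norm_starProjection_le_finrank he W

end Bessel

section GramSchmidt

variable [LinearOrder ι] [LocallyFiniteOrderBot ι] [WellFoundedLT ι] (f : ι → E)

lemma gramSchmidt_mem_orthogonal_span_Iio {m n : ι} (hmn : m ≤ n) :
    gramSchmidt 𝕜 f n ∈ (Submodule.span 𝕜 (f '' Set.Iio m))ᗮ := by
  rw [Submodule.mem_orthogonal']
  intro u hu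
  induction hu using Submodule.span_induction with
  | mem _ hx =>
    obtain ⟨i, hi, rfl⟩ := hx
    exact InnerProductSpace.gramSchmidt_inv_triangular 𝕜 f (hi.trans_le hmn)
  | zero => exact inner_zero_right _
  | add _ _ _ _ hx hy => rw [inner_add_right, hx, hy, add_zero]
  | smul _ _ _ hx => rw [inner_smul_right, hx, mul_zero]

lemma sub_gramSchmidt_mem_span_Iio (n : ι) :
    f n - gramSchmidt 𝕜 f n ∈ Submodule.span 𝕜 (f '' Set.Iio n) := by
  rw [InnerProductSpace.gramSchmidt_def, sub_sub_cancel,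
    ← InnerProductSpace.span_gramSchmidt_Iio]
  refine Submodule.sum_mem _ fun i hi => ?_
  rw [Submodule.starProjection_singleton]
  exact Submodule.smul_mem _ _
    (Submodule.subset_span (Set.mem_image_of_mem _ (Finset.mem_Iio.1 hi)))

lemma infDist_span_Iio_eq_norm_gramSchmidt (n : ι) :
    Metric.infDist (f n) (Submodule.span 𝕜 (f '' Set.Iio n) : Set E) = ‖gramSchmidt 𝕜 f n‖ := by
  have h := gramSchmidt_mem_orthogonal_span_Iio (𝕜 := 𝕜) f le_rfl (n := n)
  rw [← sub_sub_cancel (f n) (gramSchmidt 𝕜 f n)] at h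
  rw [infDist_eq_norm_sub_of_sub_mem_orthogonal (sub_gramSchmidt_mem_span_Iio f n) h,
    sub_sub_cancel]

lemma inner_gramSchmidtNormed_of_sub_mem_span_Iio {n : ι} {x : E}
    (hx : f n - x ∈ Submodule.span 𝕜 (f '' Set.Iio n)) :
    inner 𝕜 (gramSchmidtNormed 𝕜 f n) x = ‖gramSchmidt 𝕜 f n‖ := by
  set g := gramSchmidt 𝕜 f n with hg
  have hgx : inner 𝕜 g x = inner 𝕜 g g := by
    have hsub : g - x ∈ Submodule.span 𝕜 (f '' Set.Iio n) := by
      simpa only [sub_sub_sub_cancel_left] using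
        Submodule.sub_mem _ hx (sub_gramSchmidt_mem_span_Iio f n)
    have := Submodule.inner_left_of_mem_orthogonal hsub
      (gramSchmidt_mem_orthogonal_span_Iio f le_rfl)
    rw [← hg, inner_sub_right, sub_eq_zero] at this
    exact this.symm
  rw [gramSchmidtNormed, ← hg, inner_smul_left, hgx, inner_self_eq_norm_sq_to_K, map_inv₀,
    RCLike.conj_ofReal, sq, ← mul_assoc, inv_mul_mul_self]

lemma sum_sq_norm_inner_gramSchmidtNormed_le (s : Finset ι) (x : E) :
    ∑ i ∈ s, ‖inner 𝕜 (gramSchmidtNormed 𝕜 f i) x‖ ^ 2 ≤ ‖x‖ ^ 2 := by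
  classical
  calc ∑ i ∈ s, ‖inner 𝕜 (gramSchmidtNormed 𝕜 f i) x‖ ^ 2
      = ∑ i ∈ s with gramSchmidtNormed 𝕜 f i ≠ 0, ‖inner 𝕜 (gramSchmidtNormed 𝕜 f i) x‖ ^ 2 := by
        refine (Finset.sum_filter_of_ne fun i _ => mt fun hi => ?_).symm
        rw [hi, inner_zero_left, norm_zero, zero_pow two_ne_zero]
    _ = ∑ i ∈ s.subtype fun i => gramSchmidtNormed 𝕜 f i ≠ 0,
          ‖inner 𝕜 (gramSchmidtNormed 𝕜 f i) x‖ ^ 2 :=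
        (Finset.sum_subtype_eq_sum_filter _).symm
    _ ≤ ‖x‖ ^ 2 := (InnerProductSpace.gramSchmidtNormed_orthonormal' f).sum_inner_products_le x

theorem sum_infDist_span_Iio_le {N : ι} {s : Finset ι} (hs : ∀ i ∈ s, N ≤ i)
    (Y : Submodule 𝕜 E) [FiniteDimensional 𝕜 Y] :
    ∑ i ∈ s, Metric.infDist (f i) (Submodule.span 𝕜 (f '' Set.Iio i) : Set E) ≤
      √(∑ i ∈ s, Metric.infDist (f i) (Submodule.span 𝕜 (f '' Set.Iio N) : Set E) ^ 2) *
          √(Module.finrank 𝕜 Y) +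
        ∑ i ∈ s, Metric.infDist (f i) (Y : Set E) := by
  set V := Submodule.span 𝕜 (f '' Set.Iio N)
  have : FiniteDimensional 𝕜 V := .span_of_finite 𝕜 ((Set.finite_Iio N).image f)
  let P : E →L[𝕜] E := Vᗮ.starProjection
  have hP (x : E) : P x = x - V.starProjection x := Submodule.starProjection_orthogonal_val x
  have hP_lip : LipschitzWith 1 P :=
    P.lipschitz.weaken Vᗮ.starProjection_norm_le
  have hnorm (i : ι) : ‖P (f i)‖ = Metric.infDist (f i) (V : Set E) := by
    rw [hP, infDist_eq_norm_sub_starProjection]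
  have hdist (i : ι) : Metric.infDist (P (f i)) (Y.map (P : E →ₗ[𝕜] E) : Set E) ≤
      Metric.infDist (f i) (Y : Set E) := by
    rw [Submodule.map_coe]
    exact infDist_image_le_of_lipschitzWith_one hP_lip _ _
  have hdiag {i : ι} (hi : i ∈ s) :
      RCLike.re (inner 𝕜 (gramSchmidtNormed 𝕜 f i) (P (f i))) =
        Metric.infDist (f i) (Submodule.span 𝕜 (f '' Set.Iio i) : Set E) := by
    rw [inner_gramSchmidtNormed_of_sub_mem_span_Iio, RCLike.ofReal_re,
      infDist_span_Iio_eq_norm_gramSchmidt]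
    rw [hP, sub_sub_cancel]
    exact Submodule.span_mono (Set.image_mono (Set.Iio_subset_Iio (hs i hi)))
      (V.starProjection_apply_mem _)
  rw [← Finset.sum_congr rfl fun i hi => hdiag hi]
  simp only [← hnorm]
  refine (sum_re_inner_le_of_bessel (sum_sq_norm_inner_gramSchmidtNormed_le f s)
    (fun i => P (f i)) (Y.map (P : E →ₗ[𝕜] E))).trans ?_
  gcongr with i
  · exact Submodule.finrank_map_le _ Y
  · exact hdist i

end GramSchmidt

end InnerProduct

lemma infDist_span_singleton_le_of_finrank_le_one {𝕜 E : Type*} [NormedField 𝕜]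
    [NormedAddCommGroup E] [NormedSpace 𝕜 E] {Y : Submodule 𝕜 E} [FiniteDimensional 𝕜 Y]
    (hY : Module.finrank 𝕜 Y ≤ 1) {x z : E} {c δ : ℝ} (hc : 0 ≤ c) (hzx : ‖z‖ ≤ c * ‖x‖)
    (hx : Metric.infDist x (Y : Set E) < δ) (hz : Metric.infDist z (Y : Set E) < δ) :
    Metric.infDist z (Submodule.span 𝕜 {x} : Set E) ≤ (2 + 2 * c) * δ := by
  obtain ⟨x', hx'Y, hx'⟩ := (Metric.infDist_lt_iff Y.nonempty).1 hx
  obtain ⟨z', hz'Y, hz'⟩ := (Metric.infDist_lt_iff Y.nonempty).1 hz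
  rw [dist_eq_norm] at hx' hz'
  have hδ : 0 < δ := Metric.infDist_nonneg.trans_lt hx
  rcases le_or_gt ‖x‖ (2 * δ) with hsmall | hlarge
  · calc Metric.infDist z (Submodule.span 𝕜 {x} : Set E) ≤ dist z 0 :=
          Metric.infDist_le_dist_of_mem (Submodule.zero_mem _)
      _ ≤ c * (2 * δ) := by rw [dist_zero_right]; exact hzx.trans (by gcongr)
      _ ≤ (2 + 2 * c) * δ := by linarith
  · have hx'_norm : ‖x‖ / 2 < ‖x'‖ := by linarith [norm_sub_norm_le x x']
    have hx'_pos : 0 < ‖x'‖ := by linarith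
    obtain ⟨t, rfl⟩ : ∃ t : 𝕜, t • x' = z' := by
      have hx'_ne : (⟨x', hx'Y⟩ : Y) ≠ 0 := by
        simpa only [ne_eq, Submodule.mk_eq_zero] using norm_pos_iff.1 hx'_pos
      have : Nontrivial Y := nontrivial_of_ne _ _ hx'_ne
      obtain ⟨t, ht⟩ := exists_smul_eq_of_finrank_eq_one
        (hY.antisymm Module.finrank_pos) hx'_ne ⟨z', hz'Y⟩
      exact ⟨t, congrArg Subtype.val ht⟩
    have ht : ‖t‖ ≤ 2 * c + 1 := by
      refine le_of_mul_le_mul_right ?_ hx'_pos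
      calc ‖t‖ * ‖x'‖ = ‖t • x'‖ := (norm_smul _ _).symm
        _ ≤ ‖z‖ + ‖z - t • x'‖ := norm_le_norm_add_norm_sub _ _
        _ ≤ (2 * c + 1) * (‖x‖ / 2) := by linarith
        _ ≤ (2 * c + 1) * ‖x'‖ := by gcongr
    calc Metric.infDist z (Submodule.span 𝕜 {x} : Set E) ≤ dist z (t • x) :=
          Metric.infDist_le_dist_of_mem (Submodule.mem_span_singleton.2 ⟨t, rfl⟩)
      _ = ‖(z - t • x') - t • (x - x')‖ := by
          rw [dist_eq_norm, smul_sub, sub_sub_sub_cancel_right]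
      _ ≤ ‖z - t • x'‖ + ‖t‖ * ‖x - x'‖ := by
          rw [← norm_smul]; exact norm_sub_le _ _
      _ ≤ δ + (2 * c + 1) * δ := by gcongr
      _ = (2 + 2 * c) * δ := by ring

section Deviation

variable {X : Type*} [NormedAddCommGroup X] [NormedSpace ℝ X] {K : Set X}

/-- The deviation `sup_{g ∈ K} dist(g, Y)` of `K` from a subspace `Y`: the quantity which
`greedyError` evaluates at `spanFirst f n` and `kolmogorovWidth` minimizes over `Y`. For unbounded
`K` the supremum may take the junk value `0`. -/
noncomputable def deviation (K : Set X) (Y : Submodule ℝ X) : ℝ :=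
  sSup ((fun g => Metric.infDist g (Y : Set X)) '' K)

lemma infDist_le_deviation (hK : Bornology.IsBounded K) (Y : Submodule ℝ X) {g : X} (hg : g ∈ K) :
    Metric.infDist g (Y : Set X) ≤ deviation K Y :=
  le_csSup ((Metric.lipschitz_infDist_pt (Y : Set X)).isBounded_image hK).bddAbove
    (Set.mem_image_of_mem _ hg)

lemma deviation_nonneg (K : Set X) (Y : Submodule ℝ X) : 0 ≤ deviation K Y :=
  Real.sSup_nonneg (Set.forall_mem_image.2 fun _ _ => Metric.infDist_nonneg)

lemma deviation_le {Y : Submodule ℝ X} {c : ℝ} (hne : K.Nonempty)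
    (h : ∀ g ∈ K, Metric.infDist g (Y : Set X) ≤ c) : deviation K Y ≤ c :=
  csSup_le (hne.image _) (Set.forall_mem_image.2 h)

lemma deviation_antitone (hK : Bornology.IsBounded K) (hne : K.Nonempty) :
    Antitone (deviation K) := fun _ _ hYZ =>
  deviation_le hne fun _ hg =>
    (Metric.infDist_le_infDist_of_subset hYZ (Submodule.nonempty _)).trans
      (infDist_le_deviation hK _ hg)

lemma le_kolmogorovWidth {m : ℕ} {a : ℝ}
    (h : ∀ Y : Submodule ℝ X, FiniteDimensional ℝ Y → Module.finrank ℝ Y ≤ m → a ≤ deviation K Y) :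
    a ≤ kolmogorovWidth m K := by
  refine le_csInf ⟨_, ⊥, inferInstance, by rw [finrank_bot]; exact m.zero_le, rfl⟩ ?_
  rintro _ ⟨Y, hfin, hrank, rfl⟩
  exact h Y hfin hrank

lemma kolmogorovWidth_nonneg (m : ℕ) (K : Set X) : 0 ≤ kolmogorovWidth m K :=
  le_kolmogorovWidth fun Y _ _ => deviation_nonneg K Y

lemma greedyError_nonneg (K : Set X) (f : ℕ → X) (n : ℕ) : 0 ≤ greedyError K f n :=
  deviation_nonneg K _

lemma greedyError_antitone (hK : Bornology.IsBounded K) (hne : K.Nonempty) (f : ℕ → X) :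
    Antitone (greedyError K f) := fun _ _ hmn =>
  deviation_antitone hK hne (Submodule.span_mono (Set.image_mono (Set.Iio_subset_Iio hmn)))

end Deviation

namespace IsWeakGreedy

section NormedSpace

variable {X : Type*} [NormedAddCommGroup X] [NormedSpace ℝ X] {K : Set X} {f : ℕ → X} {γ : ℝ}

lemma nonempty (hf : IsWeakGreedy γ K f) : K.Nonempty := ⟨f 0, (hf 0).1⟩

lemma mul_greedyError_le (hf : IsWeakGreedy γ K f) (hγ : 0 < γ) (n : ℕ) :
    γ * greedyError K f n ≤ Metric.infDist (f n) (spanFirst f n : Set X) :=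
  (le_div_iff₀' hγ).1 (deviation_le hf.nonempty fun g hg => (le_div_iff₀' hγ).2 ((hf n).2 g hg))

lemma mul_norm_le (hf : IsWeakGreedy γ K f) {g : X} (hg : g ∈ K) : γ * ‖g‖ ≤ ‖f 0‖ := by
  simpa [spanFirst] using (hf 0).2 g hg

lemma greedyError_one_le (hf : IsWeakGreedy γ K f) (hK : Bornology.IsBounded K) (hγ : 0 < γ) :
    greedyError K f 1 ≤ (2 + 2 / γ) * kolmogorovWidth 1 K := by
  have hspan : spanFirst f 1 = Submodule.span ℝ {f 0} := by
    simp only [spanFirst, Nat.lt_one_iff, Set.ofPred_eq_eq_singleton, Set.image_singleton]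
  rw [← div_le_iff₀' (by positivity)]
  refine le_kolmogorovWidth fun Y _ hY => le_of_forall_gt_imp_ge_of_dense fun δ hδ => ?_
  rw [div_le_iff₀' (by positivity)]
  refine deviation_le hf.nonempty fun g hg => ?_
  have hgf : ‖g‖ ≤ γ⁻¹ * ‖f 0‖ := (le_inv_mul_iff₀ hγ).2 (hf.mul_norm_le hg)
  rw [hspan, div_eq_mul_inv]
  exact infDist_span_singleton_le_of_finrank_le_one hY (inv_nonneg.2 hγ.le) hgf
    ((infDist_le_deviation hK Y (hf 0).1).trans_lt hδ) ((infDist_le_deviation hK Y hg).trans_lt hδ)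

end NormedSpace

variable {X : Type*} [NormedAddCommGroup X] [InnerProductSpace ℝ X] {K : Set X} {f : ℕ → X} {γ : ℝ}

lemma mul_greedyError_add_le_deviation (hf : IsWeakGreedy γ K f) (hK : Bornology.IsBounded K)
    (hγ : 0 < γ) (Y : Submodule ℝ X) [FiniteDimensional ℝ Y] (N k : ℕ) :
    k * (γ * greedyError K f (N + k)) ≤
      √k * greedyError K f N * √(Module.finrank ℝ Y) + k * deviation K Y := by
  have hcard : (Finset.Ico N (N + k)).card = k := by rw [Nat.card_Ico, Nat.add_sub_cancel_left]
  calc k * (γ * greedyError K f (N + k))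
      = ∑ _i ∈ Finset.Ico N (N + k), γ * greedyError K f (N + k) := by
        rw [Finset.sum_const, hcard, nsmul_eq_mul]
    _ ≤ ∑ i ∈ Finset.Ico N (N + k), Metric.infDist (f i) (spanFirst f i : Set X) := by
        refine Finset.sum_le_sum fun i hi => le_trans ?_ (hf.mul_greedyError_le hγ i)
        gcongr
        exact greedyError_antitone hK hf.nonempty f (Finset.mem_Ico.1 hi).2.le
    _ ≤ √(∑ i ∈ Finset.Ico N (N + k), Metric.infDist (f i) (spanFirst f N : Set X) ^ 2) *
          √(Module.finrank ℝ Y) + ∑ i ∈ Finset.Ico N (N + k), Metric.infDist (f i) (Y : Set X) :=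
        sum_infDist_span_Iio_le f (fun _ hi => (Finset.mem_Ico.1 hi).1) Y
    _ ≤ √(∑ _i ∈ Finset.Ico N (N + k), greedyError K f N ^ 2) * √(Module.finrank ℝ Y) +
          ∑ _i ∈ Finset.Ico N (N + k), deviation K Y := by
        gcongr with i _ i _
        · exact Metric.infDist_nonneg
        · exact infDist_le_deviation hK _ (hf i).1
        · exact infDist_le_deviation hK Y (hf i).1
    _ = √k * greedyError K f N * √(Module.finrank ℝ Y) + k * deviation K Y := by
        rw [Finset.sum_const, Finset.sum_const, hcard, nsmul_eq_mul, nsmul_eq_mul,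
          Real.sqrt_mul k.cast_nonneg, Real.sqrt_sq (greedyError_nonneg K f N)]

theorem mul_greedyError_add_le (hf : IsWeakGreedy γ K f) (hK : Bornology.IsBounded K) (hγ : 0 < γ)
    (N m : ℕ) {k : ℕ} (hk : 0 < k) :
    γ * greedyError K f (N + k) ≤ greedyError K f N * √(m / k) + kolmogorovWidth m K := by
  rw [← sub_le_iff_le_add']
  refine le_kolmogorovWidth fun Y _ hY => ?_
  have hk' : (0 : ℝ) < k := Nat.cast_pos.2 hk
  have hσ := greedyError_nonneg K f N
  have hsqrt : k * √(m / k : ℝ) = √m * √k := by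
    rw [Real.sqrt_div m.cast_nonneg, mul_div_left_comm, Real.div_sqrt]
  rw [sub_le_iff_le_add']
  refine le_of_mul_le_mul_left ?_ hk'
  calc k * (γ * greedyError K f (N + k))
      ≤ √k * greedyError K f N * √(Module.finrank ℝ Y) + k * deviation K Y :=
        hf.mul_greedyError_add_le_deviation hK hγ Y N k
    _ ≤ √k * greedyError K f N * √m + k * deviation K Y := by gcongr
    _ = k * (greedyError K f N * √(m / k) + deviation K Y) := by
        rw [mul_add, mul_left_comm _ _ √(m / k : ℝ), hsqrt]
        ring

lemma greedyError_add_mul_le (hf : IsWeakGreedy γ K f) (hK : Bornology.IsBounded K) (hγ : 0 < γ)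
    {L m : ℕ} (hL : 0 < L) (hm : 0 < m) (N : ℕ) :
    greedyError K f (N + L * m) ≤
      (γ * √L)⁻¹ * greedyError K f N + γ⁻¹ * kolmogorovWidth m K := by
  have hratio : √((m : ℝ) / (L * m : ℕ)) = (√L)⁻¹ := by
    rw [Nat.cast_mul, div_mul_cancel_right₀ (Nat.cast_ne_zero.2 hm.ne'), Real.sqrt_inv]
  have h := hf.mul_greedyError_add_le hK hγ N m (Nat.mul_pos hL hm)
  rw [hratio] at h
  calc greedyError K f (N + L * m)
      ≤ γ⁻¹ * (greedyError K f N * (√L)⁻¹ + kolmogorovWidth m K) := (le_inv_mul_iff₀ hγ).2 h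
    _ = (γ * √L)⁻¹ * greedyError K f N + γ⁻¹ * kolmogorovWidth m K := by rw [mul_inv]; ring

end IsWeakGreedy

lemma rpow_neg_le_rpow_mul_rpow_neg {x y c s : ℝ} (hx : 0 < x) (hy : 0 < y) (hc : 0 < c)
    (hs : 0 ≤ s) (h : y ≤ c * x) : x ^ (-s) ≤ c ^ s * y ^ (-s) :=
  calc x ^ (-s) = c ^ s * (c * x) ^ (-s) := by
        rw [Real.mul_rpow hc.le hx.le, ← mul_assoc, ← Real.rpow_add hc, add_neg_cancel,
          Real.rpow_zero, one_mul]
    _ ≤ c ^ s * y ^ (-s) := by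
        gcongr ?_ * ?_
        exact Real.rpow_le_rpow_of_nonpos hy h (neg_nonpos.2 hs)

lemma exists_add_mul_eq_of_two_mul_le {L n : ℕ} (hL : 0 < L) (hn : 2 * L ≤ n) :
    ∃ N m : ℕ, 0 < m ∧ N + L * m = n ∧ n ≤ 2 * N ∧ n ≤ 4 * L * m := by
  obtain ⟨m, hmn, hnm⟩ : ∃ m, 2 * L * m ≤ n ∧ n < 2 * L * (m + 1) :=
    ⟨n / (2 * L), Nat.mul_div_le _ _, Nat.lt_mul_div_succ _ (by omega)⟩
  have hm : 0 < m := Nat.pos_of_ne_zero (by rintro rfl; omega)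
  have hLm : L ≤ L * m := Nat.le_mul_of_pos_right L hm
  exact ⟨n - L * m, m, hm, by grind, by grind, by grind⟩

theorem le_mul_rpow_neg_of_add_mul_le {σ : ℕ → ℝ} {a b s : ℝ} {L : ℕ} (hσ : Antitone σ)
    (ha : 0 ≤ a) (hb : 0 ≤ b) (hs : 0 ≤ s) (hL : 0 < L) (hhalf : a * 2 ^ s ≤ 1 / 2) (hσ₁ : σ 1 ≤ b)
    (hrec : ∀ N m : ℕ, 0 < m → σ (N + L * m) ≤ a * σ N + b * (m : ℝ) ^ (-s)) {n : ℕ} (hn : 0 < n) :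
    σ n ≤ 2 * (4 * L) ^ s * b * (n : ℝ) ^ (-s) := by
  induction n using Nat.strong_induction_on with
  | _ n ih =>
  have hn' : (0 : ℝ) < n := Nat.cast_pos.2 hn
  set q := (n : ℝ) ^ (-s)
  rcases lt_or_ge n (2 * L) with hsmall | hlarge
  · have hq : 1 ≤ (4 * L : ℝ) ^ s * q := by
      have : (n : ℝ) ≤ 4 * L * 1 := by norm_cast; omega
      simpa only [Real.one_rpow] using
        rpow_neg_le_rpow_mul_rpow_neg one_pos hn' (by positivity) hs this
    calc σ n ≤ b := (hσ hn).trans hσ₁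
      _ ≤ 2 * ((4 * L) ^ s * q) * b := le_mul_of_one_le_left hb (by linarith)
      _ = 2 * (4 * L) ^ s * b * q := by ring
  · obtain ⟨N, m, hm, hNm, hnN, hnm⟩ := exists_add_mul_eq_of_two_mul_le hL hlarge
    have hN : 0 < N := by omega
    have hNn : N < n := hNm ▸ Nat.lt_add_of_pos_right (Nat.mul_pos hL hm)
    have hNq : (N : ℝ) ^ (-s) ≤ 2 ^ s * q :=
      rpow_neg_le_rpow_mul_rpow_neg (Nat.cast_pos.2 hN) hn' two_pos hs (by exact_mod_cast hnN)
    have hmq : (m : ℝ) ^ (-s) ≤ (4 * L) ^ s * q :=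
      rpow_neg_le_rpow_mul_rpow_neg (Nat.cast_pos.2 hm) hn' (by positivity) hs
        (by exact_mod_cast hnm)
    calc σ n ≤ a * σ N + b * (m : ℝ) ^ (-s) := hNm ▸ hrec N m hm
      _ ≤ a * (2 * (4 * L) ^ s * b * (2 ^ s * q)) + b * ((4 * L) ^ s * q) := by
          have := ih N hNn hN
          gcongr
          exact this.trans (by gcongr)
      _ = a * 2 ^ s * (2 * (4 * L) ^ s * b * q) + (4 * L) ^ s * b * q := by ring
      _ ≤ 1 / 2 * (2 * (4 * L) ^ s * b * q) + (4 * L) ^ s * b * q := by gcongr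
      _ = 2 * (4 * L) ^ s * b * q := by ring

theorem weakGreedy_rate_of_width_decay_general (s γ : ℝ) (hs : 0 ≤ s) (hγ : 0 < γ) :
    ∃ C : ℝ, 0 < C ∧
      ∀ (X : Type*) (_ : NormedAddCommGroup X) (_ : InnerProductSpace ℝ X) (K : Set X),
        Bornology.IsBounded K →
        ∀ M : ℝ, (∀ n : ℕ, 1 ≤ n → kolmogorovWidth n K ≤ M * (n : ℝ) ^ (-s)) →
        ∀ f : ℕ → X, IsWeakGreedy γ K f →
        ∀ n : ℕ, 1 ≤ n → greedyError K f n ≤ C * M * (n : ℝ) ^ (-s) := by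
  obtain ⟨L, hL⟩ := exists_nat_gt ((2 * 2 ^ s / γ) ^ 2)
  have hL' : (0 : ℝ) < L := (sq_nonneg _).trans_lt hL
  have hhalf : (γ * √L)⁻¹ * 2 ^ s ≤ 1 / 2 := by
    have : 2 * 2 ^ s ≤ γ * √L := (div_le_iff₀' hγ).1 (Real.le_sqrt_of_sq_le hL.le)
    rw [inv_mul_le_iff₀ (by positivity)]
    linarith
  refine ⟨2 * (4 * L) ^ s * (2 + 2 / γ), by positivity, fun X _ _ K hK M hM f hf n hn => ?_⟩
  have hM₁ : kolmogorovWidth 1 K ≤ M := by simpa using hM 1 le_rfl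
  have hM₀ : 0 ≤ M := (kolmogorovWidth_nonneg 1 K).trans hM₁
  have hσ₁ : greedyError K f 1 ≤ (2 + 2 / γ) * M :=
    (hf.greedyError_one_le hK hγ).trans (by gcongr)
  have hrec (N m : ℕ) (hm : 0 < m) : greedyError K f (N + L * m) ≤
      (γ * √L)⁻¹ * greedyError K f N + (2 + 2 / γ) * M * (m : ℝ) ^ (-s) := by
    refine (hf.greedyError_add_mul_le hK hγ (Nat.cast_pos.1 hL') hm N).trans ?_
    rw [mul_assoc (2 + 2 / γ)]
    have hγ_inv : γ⁻¹ ≤ 2 + 2 / γ := by rw [div_eq_mul_inv]; linarith [inv_pos.2 hγ]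
    gcongr _ + ?_
    exact mul_le_mul hγ_inv (hM m hm) (kolmogorovWidth_nonneg m K) (by positivity)
  rw [mul_assoc _ (2 + 2 / γ)]
  exact le_mul_rpow_neg_of_add_mul_le (greedyError_antitone hK hf.nonempty f) (by positivity)
    (by positivity) hs (Nat.cast_pos.1 hL') hhalf hσ₁ hrec hn

/-- if `d_n(K) ≤ M n^{-s}` with `s > 1/2`, then the weak greedy algorithm
converges with rate `n^{1/2 - s}`, with a constant depending only on `s, M, γ`. -/
theorem weakGreedy_rate_of_width_decay (s M γ : ℝ) (hs : 1 / 2 < s) (hM : 0 < M)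
    (hγ : γ ∈ Set.Ioc (0 : ℝ) 1) :
    ∃ C : ℝ, 0 < C ∧
      ∀ (X : Type) (_ : NormedAddCommGroup X) (_ : InnerProductSpace ℝ X) (_ : CompleteSpace X)
        (K : Set X), IsCompact K →
        (∀ n : ℕ, 1 ≤ n → kolmogorovWidth n K ≤ M * (n : ℝ) ^ (-s)) →
        ∀ f : ℕ → X, IsWeakGreedy γ K f →
        ∀ n : ℕ, 1 ≤ n →
          greedyError K f n ≤ C * (n : ℝ) ^ (1 / 2 - s) := by
  obtain ⟨C, hC, hrate⟩ := weakGreedy_rate_of_width_decay_general s γ (by linarith) hγ.1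
  refine ⟨C * M, mul_pos hC hM, fun X _ _ _ K hK hwidth f hf n hn => ?_⟩
  refine (hrate X _ _ K hK.isBounded M hwidth f hf n hn).trans ?_
  gcongr ?_ * ?_
  exact Real.rpow_le_rpow_of_exponent_le (by exact_mod_cast hn) (by linarith)
end
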